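/- Let μ be a positive Borel measure on [1,∞), δ ∈ (0,1) and C > 0 be such that ∫_{[1,∞)} e^{−tx} x^{−1} dμ(x) ≤ C (−log t) for all t ∈ (0,δ]. Then ∫_{[1,∞)} x^{−2} dμ(x) < ∞. -/

import Mathlib

/-!
For `x ≥ 1` one has `∫₀^δ e^{-tx} dt = (1 - e^{-δx}) / x ≥ (1 - e^{-δ}) / x`. Multiplying by `x⁻¹`,
integrating in `μ` and exchanging the integrals bounds `∫ x⁻² dμ` by a multiple of the integral over
`t ∈ (0,δ]` of the Laplace transform of `x⁻¹ dμ`, and `-log t` is integrable at `0`. Tonelli's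
theorem needs s-finiteness, which holds because a measure whose Laplace transform is finite at one
point has a positive integrable function.
-/

open MeasureTheory Filter Real Set

open scoped ENNReal

/-- The Laplace transform `L(ν)(t) = ∫ e^{-tx} dν(x)` of a positive measure on `ℝ`. It is valued in
`ℝ≥0∞`, so that a divergent integral is `∞` and not a junk value. -/
noncomputable def laplaceTransform (ν : Measure ℝ) (t : ℝ) : ℝ≥0∞ :=
  ∫⁻ x, ENNReal.ofReal (exp (-t * x)) ∂ν

theorem laplaceTransform_withDensity_ofReal (ν : Measure ℝ) {f : ℝ → ℝ} (hf : Measurable f)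
    (t : ℝ) :
    laplaceTransform (ν.withDensity fun x ↦ ENNReal.ofReal (f x)) t =
      ∫⁻ x, ENNReal.ofReal (exp (-t * x) * f x) ∂ν := by
  rw [laplaceTransform, lintegral_withDensity_eq_lintegral_mul _ (by fun_prop) (by fun_prop)]
  refine lintegral_congr fun x ↦ ?_
  rw [Pi.mul_apply, mul_comm, ENNReal.ofReal_mul (exp_pos _).le]

theorem sFinite_of_lintegral_ne_top {α : Type*} [MeasurableSpace α] {ν : Measure α} {f : α → ℝ≥0∞}
    (hf : AEMeasurable f ν) (hf_ne_zero : ∀ᵐ x ∂ν, f x ≠ 0) (hf_int : ∫⁻ x, f x ∂ν ≠ ∞) :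
    SFinite ν := by
  have : IsFiniteMeasure (ν.withDensity f) := isFiniteMeasure_withDensity hf_int
  exact sFinite_of_absolutelyContinuous (withDensity_absolutelyContinuous' hf hf_ne_zero)

theorem sFinite_of_laplaceTransform_ne_top {ν : Measure ℝ} {t : ℝ}
    (h : laplaceTransform ν t ≠ ∞) : SFinite ν :=
  sFinite_of_lintegral_ne_top (by fun_prop)
    (ae_of_all _ fun _ ↦ (ENNReal.ofReal_pos.2 (exp_pos _)).ne') h

theorem setLIntegral_exp_neg_mul_Ioc {x δ : ℝ} (hx : x ≠ 0) (hδ : 0 ≤ δ) :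
    ∫⁻ t in Ioc 0 δ, ENNReal.ofReal (exp (-t * x)) =
      ENNReal.ofReal ((1 - exp (-δ * x)) * x⁻¹) := by
  have hint : IntegrableOn (fun t ↦ exp (-t * x)) (Ioc 0 δ) :=
    (by fun_prop : Continuous fun t ↦ exp (-t * x)).integrableOn_Ioc
  have hderiv (t : ℝ) : HasDerivAt (fun t ↦ -exp (-t * x) * x⁻¹) (exp (-t * x)) t := by
    have h := ((hasDerivAt_id t).neg.mul_const x).exp.neg.mul_const x⁻¹
    simpa [hx] using h
  rw [← ofReal_integral_eq_lintegral_ofReal hint (ae_of_all _ fun _ ↦ (exp_pos _).le),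
    ← intervalIntegral.integral_of_le hδ,
    intervalIntegral.integral_eq_sub_of_hasDerivAt (fun t _ ↦ hderiv t)
      ((intervalIntegrable_iff_integrableOn_Ioc_of_le hδ).2 hint)]
  congr 1
  simp only [neg_zero, zero_mul, exp_zero]
  ring

theorem mul_lintegral_inv_le_setLIntegral_laplaceTransform {ν : Measure ℝ} [SFinite ν] {a δ : ℝ}
    (ha : 0 < a) (hδ : 0 ≤ δ) (hν : ∀ᵐ x ∂ν, a ≤ x) :
    ENNReal.ofReal (1 - exp (-δ * a)) * ∫⁻ x, ENNReal.ofReal x⁻¹ ∂ν ≤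
      ∫⁻ t in Ioc 0 δ, laplaceTransform ν t := by
  have hc : 0 ≤ 1 - exp (-δ * a) := by
    rw [sub_nonneg, exp_le_one_iff, neg_mul, neg_nonpos]
    positivity
  calc ENNReal.ofReal (1 - exp (-δ * a)) * ∫⁻ x, ENNReal.ofReal x⁻¹ ∂ν
      = ∫⁻ x, ENNReal.ofReal ((1 - exp (-δ * a)) * x⁻¹) ∂ν := by
        simp only [ENNReal.ofReal_mul hc]
        rw [lintegral_const_mul _ (by fun_prop)]
    _ ≤ ∫⁻ x, ENNReal.ofReal ((1 - exp (-δ * x)) * x⁻¹) ∂ν := by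
        refine lintegral_mono_ae (hν.mono fun x hx ↦ ENNReal.ofReal_le_ofReal ?_)
        have hx0 : 0 < x := ha.trans_le hx
        have hexp : exp (-δ * x) ≤ exp (-δ * a) :=
          exp_le_exp.2 (mul_le_mul_of_nonpos_left hx (neg_nonpos.2 hδ))
        gcongr
    _ = ∫⁻ x, (∫⁻ t in Ioc 0 δ, ENNReal.ofReal (exp (-t * x))) ∂ν :=
        lintegral_congr_ae <| hν.mono fun x hx ↦
          (setLIntegral_exp_neg_mul_Ioc (ha.trans_le hx).ne' hδ).symm
    _ = ∫⁻ t in Ioc 0 δ, laplaceTransform ν t := lintegral_lintegral_swap (by fun_prop)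

theorem lintegral_inv_lt_top_of_setLIntegral_laplaceTransform_lt_top {ν : Measure ℝ} {a δ : ℝ}
    (ha : 0 < a) (hδ : 0 < δ) (hν : ∀ᵐ x ∂ν, a ≤ x)
    (h : ∫⁻ t in Ioc 0 δ, laplaceTransform ν t < ∞) :
    ∫⁻ x, ENNReal.ofReal x⁻¹ ∂ν < ∞ := by
  obtain ⟨t, -, ht⟩ : ∃ t ∈ Ioc 0 δ, laplaceTransform ν t ≠ ∞ := by
    by_contra! htop
    rw [setLIntegral_congr_fun measurableSet_Ioc htop] at h
    simp [ENNReal.top_mul, hδ] at h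
  have : SFinite ν := sFinite_of_laplaceTransform_ne_top ht
  have hc : 0 < 1 - exp (-δ * a) := by
    rw [sub_pos, exp_lt_one_iff, neg_mul, neg_neg_iff_pos]
    positivity
  exact ENNReal.lt_top_of_mul_ne_top_right
    ((mul_lintegral_inv_le_setLIntegral_laplaceTransform ha hδ.le hν).trans_lt h).ne
    (ENNReal.ofReal_pos.2 hc).ne'

theorem setLIntegral_const_mul_neg_log_Ioc_lt_top (C : ℝ) {δ : ℝ} (hδ : 0 ≤ δ) :
    ∫⁻ t in Ioc 0 δ, ENNReal.ofReal (C * -log t) < ∞ :=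
  (((intervalIntegrable_iff_integrableOn_Ioc_of_le hδ).1
    intervalIntegral.intervalIntegrable_log').neg.const_mul C).lintegral_lt_top

theorem second_inverse_moment_of_log_bound_general (μ : Measure ℝ) {a δ : ℝ} (ha : 0 < a)
    (hδ : 0 < δ)
    (h : ∫⁻ t in Ioc 0 δ, ∫⁻ x in Ici a, ENNReal.ofReal (exp (-t * x) * x⁻¹) ∂μ < ∞) :
    ∫⁻ x in Ici a, ENNReal.ofReal ((x ^ 2)⁻¹) ∂μ < ∞ := by
  let ν := (μ.restrict (Ici a)).withDensity fun x ↦ ENNReal.ofReal x⁻¹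
  have hν : ∀ᵐ x ∂ν, a ≤ x :=
    (withDensity_absolutelyContinuous _ _).ae_le (ae_restrict_mem measurableSet_Ici)
  have hmoment : ∫⁻ x in Ici a, ENNReal.ofReal ((x ^ 2)⁻¹) ∂μ = ∫⁻ x, ENNReal.ofReal x⁻¹ ∂ν := by
    rw [lintegral_withDensity_eq_lintegral_mul _ (by fun_prop) (by fun_prop)]
    refine setLIntegral_congr_fun measurableSet_Ici fun x hx ↦ ?_
    have hx0 : 0 ≤ x⁻¹ := inv_nonneg.2 (ha.le.trans hx)
    rw [Pi.mul_apply, ← ENNReal.ofReal_mul hx0, sq, mul_inv]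
  rw [hmoment]
  refine lintegral_inv_lt_top_of_setLIntegral_laplaceTransform_lt_top ha hδ hν ?_
  simpa only [ν, laplaceTransform_withDensity_ofReal _ measurable_inv] using h

/-- If `μ` is a positive Borel measure on `[1,∞)`, `δ ∈ (0,1)` and `C > 0` with
`∫_{[1,∞)} e^{-tx} x⁻¹ dμ(x) ≤ C (-log t)` for all `t ∈ (0,δ]`, then
`∫_{[1,∞)} x⁻² dμ(x) < ∞`. -/
theorem second_inverse_moment_of_log_bound (μ : Measure ℝ) (hμ : μ (Set.Iio 1) = 0)
    (δ : ℝ) (hδ : δ ∈ Set.Ioo (0:ℝ) 1) (C : ℝ) (hC : 0 < C)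
    (hbound : ∀ t ∈ Set.Ioc 0 δ,
      ∫⁻ x in Set.Ici (1:ℝ), ENNReal.ofReal (Real.exp (-t * x) * x⁻¹) ∂μ ≤
        ENNReal.ofReal (C * (-Real.log t))) :
    ∫⁻ x in Set.Ici (1:ℝ), ENNReal.ofReal ((x ^ 2)⁻¹) ∂μ < ⊤ :=
  second_inverse_moment_of_log_bound_general μ one_pos hδ.1 <|
    (setLIntegral_mono' measurableSet_Ioc hbound).trans_lt
      (setLIntegral_const_mul_neg_log_Ioc_lt_top C hδ.1.le)
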